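/- Let P₁, …, P_K be p-variables on a common probability space (with arbitrary dependence) and let λ₁, …, λ_K ≥ 0 with λ₁ + ⋯ + λ_K = 1. Then the convex combination Σ_{k=1}^K λ_k P_k is a p*-variable. -/

import Mathlib

open MeasureTheory ProbabilityTheory

/-- `P` is a p-variable: `ℙ(P ≤ α) ≤ α` for all `α ∈ (0,1)`. -/
def IsPVar {Ω : Type*} [MeasurableSpace Ω] (μ : Measure Ω) (P : Ω → ℝ) : Prop :=
  ∀ α ∈ Set.Ioo (0:ℝ) 1, μ {ω | P ω ≤ α} ≤ ENNReal.ofReal α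

/-- `P` is a p*-variable: `E[f(U)] ≤ E[f(P)]` for every increasing concave `f : ℝ → ℝ` for
which both expectations exist, where `U` is uniform on `[0,1]`. -/
def IsPStarVar {Ω : Type*} [MeasurableSpace Ω] (μ : Measure Ω) (P : Ω → ℝ) : Prop :=
  ∀ f : ℝ → ℝ, Monotone f → ConcaveOn ℝ Set.univ f →
    IntervalIntegrable f volume 0 1 → Integrable (fun ω => f (P ω)) μ →
    ∫ u in (0:ℝ)..1, f u ≤ ∫ ω, f (P ω) ∂μ

/-!
For an increasing concave `f`, the function `f (min · 1)` is again increasing and concave, agrees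
with `f` on `[0, 1]` and is bounded on `[0, ∞)`. Truncating at `1` thus makes all expectations of
the components finite, and Jensen's inequality for `f (min · 1)` carries the comparison with the
uniform distribution over to convex combinations of nonnegative p*-variables. A p-variable is a
p*-variable because it dominates the uniform distribution in the first stochastic order.
-/

open Filter Topology

section StochasticOrder

variable {α β : Type*} [MeasurableSpace α] [MeasurableSpace β] {μ : Measure α} {ν : Measure β}

lemma measure_preimage_le_of_isLowerSet {γ : Type*} [LinearOrder γ] [TopologicalSpace γ]
    [OrderTopology γ] [SecondCountableTopology γ] {X : α → γ} {Y : β → γ}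
    (h : ∀ x, μ (X ⁻¹' Set.Iic x) ≤ ν (Y ⁻¹' Set.Iic x)) {L : Set γ} (hL : IsLowerSet L) :
    μ (X ⁻¹' L) ≤ ν (Y ⁻¹' L) := by
  have : L.OrdConnected := hL.ordConnected
  have hL_eq : L = ⋃ x : L, Set.Iic (x : γ) := by
    rw [Set.iUnion_coe_set, ← coe_lowerClosure, hL.lowerClosure]
  have hmono : Monotone fun x : L => Set.Iic (x : γ) := fun _ _ hxy => Set.Iic_subset_Iic.mpr hxy
  calc μ (X ⁻¹' L) = μ (⋃ x : L, X ⁻¹' Set.Iic (x : γ)) := by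
        rw [← Set.preimage_iUnion, ← hL_eq]
    _ = ⨆ x : L, μ (X ⁻¹' Set.Iic (x : γ)) := (Set.monotone_preimage.comp hmono).measure_iUnion
    _ ≤ ⨆ x : L, ν (Y ⁻¹' Set.Iic (x : γ)) := iSup_mono fun x => h x
    _ = ν (⋃ x : L, Y ⁻¹' Set.Iic (x : γ)) :=
        (Set.monotone_preimage.comp hmono).measure_iUnion.symm
    _ = ν (Y ⁻¹' L) := by rw [← Set.preimage_iUnion, ← hL_eq]

lemma lintegral_ofReal_eq_lintegral_meas_le {f : α → ℝ} (hf : AEMeasurable f μ) :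
    ∫⁻ x, ENNReal.ofReal (f x) ∂μ = ∫⁻ t in Set.Ioi 0, μ {x | t ≤ f x} := by
  have hmax : AEMeasurable (fun x => max (f x) 0) μ := hf.max aemeasurable_const
  calc ∫⁻ x, ENNReal.ofReal (f x) ∂μ = ∫⁻ x, ENNReal.ofReal (max (f x) 0) ∂μ := by
        simp [ENNReal.ofReal_max]
    _ = ∫⁻ t in Set.Ioi 0, μ {x | t ≤ max (f x) 0} :=
        lintegral_eq_lintegral_meas_le μ (ae_of_all _ fun _ => le_max_right _ _) hmax
    _ = ∫⁻ t in Set.Ioi 0, μ {x | t ≤ f x} :=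
        setLIntegral_congr_fun measurableSet_Ioi fun t (ht : 0 < t) => by
          simp [not_le.mpr ht]

lemma lintegral_ofReal_eq_lintegral_meas_lt {f : α → ℝ} (hf : AEMeasurable f μ) :
    ∫⁻ x, ENNReal.ofReal (f x) ∂μ = ∫⁻ t in Set.Ioi 0, μ {x | t < f x} := by
  rw [lintegral_ofReal_eq_lintegral_meas_le hf]
  exact lintegral_congr_ae (meas_le_ae_eq_meas_lt μ _ f)

lemma integral_le_integral_of_measure_le_le [IsProbabilityMeasure μ] [IsProbabilityMeasure ν]
    {f : α → ℝ} {g : β → ℝ} (hf : Integrable f μ) (hg : Integrable g ν)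
    (h : ∀ t, ν {y | g y ≤ t} ≤ μ {x | f x ≤ t}) : ∫ x, f x ∂μ ≤ ∫ y, g y ∂ν := by
  have hlt (t : ℝ) : μ {x | t < f x} ≤ ν {y | t < g y} := by
    have hf_compl : {x | t < f x} = {x | f x ≤ t}ᶜ := by ext; simp
    have hg_compl : {y | t < g y} = {y | g y ≤ t}ᶜ := by ext; simp
    rw [hf_compl, hg_compl,
      prob_compl_eq_one_sub₀ (nullMeasurableSet_le hf.aemeasurable aemeasurable_const),
      prob_compl_eq_one_sub₀ (nullMeasurableSet_le hg.aemeasurable aemeasurable_const)]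
    exact tsub_le_tsub_left (h t) 1
  have hpos : ∫⁻ x, ENNReal.ofReal (f x) ∂μ ≤ ∫⁻ y, ENNReal.ofReal (g y) ∂ν := by
    rw [lintegral_ofReal_eq_lintegral_meas_lt hf.aemeasurable,
      lintegral_ofReal_eq_lintegral_meas_lt hg.aemeasurable]
    exact lintegral_mono hlt
  have hneg : ∫⁻ y, ENNReal.ofReal (-g y) ∂ν ≤ ∫⁻ x, ENNReal.ofReal (-f x) ∂μ := by
    rw [lintegral_ofReal_eq_lintegral_meas_le hg.aemeasurable.fun_neg,
      lintegral_ofReal_eq_lintegral_meas_le hf.aemeasurable.fun_neg]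
    exact lintegral_mono fun t => by simpa only [le_neg] using h (-t)
  rw [integral_eq_lintegral_pos_part_sub_lintegral_neg_part hf,
    integral_eq_lintegral_pos_part_sub_lintegral_neg_part hg]
  exact sub_le_sub (ENNReal.toReal_mono hg.lintegral_lt_top.ne hpos)
    (ENNReal.toReal_mono hf.neg.lintegral_lt_top.ne hneg)

lemma integral_comp_le_integral_comp_of_measure_Iic_le [IsProbabilityMeasure μ]
    [IsProbabilityMeasure ν] {γ : Type*} [LinearOrder γ] [TopologicalSpace γ] [OrderTopology γ]
    [SecondCountableTopology γ] {X : α → γ} {Y : β → γ}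
    (h : ∀ x, ν (Y ⁻¹' Set.Iic x) ≤ μ (X ⁻¹' Set.Iic x)) {f : γ → ℝ} (hf : Monotone f)
    (hX : Integrable (fun a => f (X a)) μ) (hY : Integrable (fun b => f (Y b)) ν) :
    ∫ a, f (X a) ∂μ ≤ ∫ b, f (Y b) ∂ν :=
  integral_le_integral_of_measure_le_le hX hY fun _ =>
    measure_preimage_le_of_isLowerSet h ((isLowerSet_Iic _).preimage hf)

end StochasticOrder

lemma concaveOn_comp_min {f : ℝ → ℝ} (hf : ConcaveOn ℝ Set.univ f) (hmono : Monotone f)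
    (c : ℝ) : ConcaveOn ℝ Set.univ fun x => f (min x c) := by
  have hmin : ConcaveOn ℝ Set.univ fun x : ℝ => min x c :=
    (concaveOn_id convex_univ).inf (concaveOn_const c convex_univ)
  have himage : Convex ℝ ((fun x : ℝ => min x c) '' Set.univ) := by
    rw [Set.image_univ]
    exact (isPreconnected_range (continuous_id.min continuous_const)).ordConnected.convex
  exact (hf.subset (Set.subset_univ _) himage).comp hmin (hmono.monotoneOn _)

lemma integrable_comp_min {Ω : Type*} [MeasurableSpace Ω] {μ : Measure Ω} [IsFiniteMeasure μ]
    {X : Ω → ℝ} (hX : AEMeasurable X μ) {a : ℝ} (ha : ∀ᵐ ω ∂μ, a ≤ X ω) {f : ℝ → ℝ}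
    (hf : Monotone f) (c : ℝ) : Integrable (fun ω => f (min (X ω) c)) μ := by
  refine Integrable.of_mem_Icc (f (min a c)) (f c)
    (hf.measurable.comp_aemeasurable (hX.min aemeasurable_const)) ?_
  filter_upwards [ha] with ω hω
  exact ⟨hf (min_le_min_right c hω), hf (min_le_right _ _)⟩

section PVariables

variable {Ω : Type*} [MeasurableSpace Ω] {μ : Measure Ω} {P : Ω → ℝ}

lemma IsPVar.measure_nonpos_eq_zero (hP : IsPVar μ P) : μ {ω | P ω ≤ 0} = 0 := by
  have htendsto : Tendsto ENNReal.ofReal (𝓝[>] 0) (𝓝 0) := by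
    simpa using (ENNReal.continuous_ofReal.tendsto 0).mono_left nhdsWithin_le_nhds
  refine nonpos_iff_eq_zero.mp (ge_of_tendsto htendsto ?_)
  filter_upwards [Ioo_mem_nhdsGT one_pos] with ε hε
  exact (measure_mono fun ω (hω : P ω ≤ 0) => hω.trans hε.1.le).trans (hP ε hε)

lemma IsPVar.ae_pos (hP : IsPVar μ P) : ∀ᵐ ω ∂μ, 0 < P ω := by
  simpa only [ae_iff, not_lt] using hP.measure_nonpos_eq_zero

lemma IsPVar.measure_le_restrict_Iic [IsProbabilityMeasure μ] (hP : IsPVar μ P) (x : ℝ) :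
    μ {ω | P ω ≤ x} ≤ volume.restrict (Set.Ioc (0 : ℝ) 1) (Set.Iic x) := by
  have huniform : volume.restrict (Set.Ioc (0 : ℝ) 1) (Set.Iic x) = ENNReal.ofReal (min 1 x) := by
    rw [Measure.restrict_apply measurableSet_Iic, Set.inter_comm, Set.Ioc_inter_Iic,
      Real.volume_Ioc, sub_zero]
  rw [huniform]
  rcases le_or_gt x 0 with hx0 | hx0
  · exact (measure_mono_null (fun ω (hω : P ω ≤ x) => hω.trans hx0)
      hP.measure_nonpos_eq_zero).trans_le zero_le
  rcases le_or_gt 1 x with hx1 | hx1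
  · simpa [hx1] using prob_le_one
  · simpa [hx1.le] using hP x ⟨hx0, hx1⟩

lemma IsPVar.intervalIntegral_le_integral_comp [IsProbabilityMeasure μ] (hP : IsPVar μ P)
    {f : ℝ → ℝ} (hf : Monotone f) (hfP : Integrable (fun ω => f (P ω)) μ) :
    ∫ u in (0 : ℝ)..1, f u ≤ ∫ ω, f (P ω) ∂μ := by
  have : IsProbabilityMeasure (volume.restrict (Set.Ioc (0 : ℝ) 1)) := ⟨by simp⟩
  rw [intervalIntegral.integral_of_le zero_le_one]
  exact integral_comp_le_integral_comp_of_measure_Iic_le (X := id) hP.measure_le_restrict_Iic hf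
    (hf.intervalIntegrable (a := 0) (b := 1)).1 hfP

theorem IsPVar.isPStarVar [IsProbabilityMeasure μ] (hP : IsPVar μ P) : IsPStarVar μ P :=
  fun _ hmono _ _ hint => hP.intervalIntegral_le_integral_comp hmono hint

lemma IsPStarVar.intervalIntegral_le_integral_comp_min [IsFiniteMeasure μ] (hP : IsPStarVar μ P)
    (hmeas : AEMeasurable P μ) (hnonneg : ∀ᵐ ω ∂μ, 0 ≤ P ω) {f : ℝ → ℝ} (hmono : Monotone f)
    (hconc : ConcaveOn ℝ Set.univ f) :
    ∫ u in (0 : ℝ)..1, f u ≤ ∫ ω, f (min (P ω) 1) ∂μ := by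
  have hmono_min : Monotone fun x => f (min x 1) := fun _ _ hxy => hmono (min_le_min_right 1 hxy)
  calc ∫ u in (0 : ℝ)..1, f u = ∫ u in (0 : ℝ)..1, f (min u 1) :=
        intervalIntegral.integral_congr fun u hu => by
          rw [Set.uIcc_of_le zero_le_one] at hu
          simp only [min_eq_left hu.2]
    _ ≤ ∫ ω, f (min (P ω) 1) ∂μ :=
        hP _ hmono_min (concaveOn_comp_min hconc hmono 1) hmono_min.intervalIntegrable
          (integrable_comp_min hmeas hnonneg hmono 1)

end PVariables

theorem isPStarVar_convex_combination_general {Ω ι : Type*} [MeasurableSpace Ω] {μ : Measure Ω}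
    [IsFiniteMeasure μ] {s : Finset ι} {P : ι → Ω → ℝ} (hmeas : ∀ k ∈ s, AEMeasurable (P k) μ)
    (hnonneg : ∀ k ∈ s, ∀ᵐ ω ∂μ, 0 ≤ P k ω) (hP : ∀ k ∈ s, IsPStarVar μ (P k))
    {w : ι → ℝ} (hw : ∀ k ∈ s, 0 ≤ w k) (hsum : ∑ k ∈ s, w k = 1) :
    IsPStarVar μ (fun ω => ∑ k ∈ s, w k * P k ω) := by
  intro f hmono hconc _ hint
  have hint_min : ∀ k ∈ s, Integrable (fun ω => w k * f (min (P k ω) 1)) μ := fun k hk =>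
    (integrable_comp_min (hmeas k hk) (hnonneg k hk) hmono 1).const_mul (w k)
  have hjensen (ω : Ω) : ∑ k ∈ s, w k * f (min (P k ω) 1) ≤ f (∑ k ∈ s, w k * P k ω) :=
    ((concaveOn_comp_min hconc hmono 1).le_map_sum hw hsum fun _ _ => Set.mem_univ _).trans
      (hmono (min_le_left _ _))
  calc ∫ u in (0 : ℝ)..1, f u = ∑ k ∈ s, w k * ∫ u in (0 : ℝ)..1, f u := by
        rw [← Finset.sum_mul, hsum, one_mul]
    _ ≤ ∑ k ∈ s, w k * ∫ ω, f (min (P k ω) 1) ∂μ := Finset.sum_le_sum fun k hk =>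
        mul_le_mul_of_nonneg_left ((hP k hk).intervalIntegral_le_integral_comp_min (hmeas k hk)
          (hnonneg k hk) hmono hconc) (hw k hk)
    _ = ∫ ω, ∑ k ∈ s, w k * f (min (P k ω) 1) ∂μ := by
        simp only [integral_finsetSum s hint_min, integral_const_mul]
    _ ≤ ∫ ω, f (∑ k ∈ s, w k * P k ω) ∂μ :=
        integral_mono (integrable_finsetSum s hint_min) hint hjensen

/-- **Theorem.** A convex combination of (arbitrarily dependent) p-variables is a
p*-variable. -/
theorem isPStarVar_convex_combination
    {Ω : Type*} [MeasurableSpace Ω] (μ : Measure Ω) [IsProbabilityMeasure μ]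
    {K : ℕ} (P : Fin K → Ω → ℝ) (hmeas : ∀ k, Measurable (P k))
    (hp : ∀ k, IsPVar μ (P k))
    (w : Fin K → ℝ) (hw : ∀ k, 0 ≤ w k) (hsum : ∑ k, w k = 1) :
    IsPStarVar μ (fun ω => ∑ k, w k * P k ω) :=
  isPStarVar_convex_combination_general (fun k _ => (hmeas k).aemeasurable)
    (fun k _ => (hp k).ae_pos.mono fun _ => le_of_lt) (fun k _ => (hp k).isPStarVar)
    (fun k _ => hw k) hsum
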